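/- Let T = {2341, 2431, 3241} (patterns of length 4). Then for every n ≥ 1 the number of permutations of length n avoiding all patterns in T is |S_n(T)| = ∑_{i=1}^{n} (1/i)·binom(n-1, i-1)·binom(2n-i, i-1). Equivalently, the generating function F_T(x) = ∑_{n≥0} |S_n(T)| x^n satisfies, as formal power series over ℚ, (1 - x·F_T(x)^2)·(F_T(x) - 1) = x·F_T(x). -/

import Mathlib

open PowerSeries

/-- A permutation `π` of `{0,…,n-1}` contains the pattern `σ` (of length `k`) if there is an
order-embedding of positions on which the values of `π` appear in the same relative order as
the values of `σ`. -/
def ContainsPattern {n k : ℕ} (π : Equiv.Perm (Fin n)) (σ : Fin k → Fin k) : Prop :=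
  ∃ f : Fin k ↪o Fin n, ∀ a b : Fin k, σ a < σ b ↔ π (f a) < π (f b)

/-- The number of permutations of length `n` avoiding every pattern in `T`. -/
noncomputable def avoiderCount (T : Set (Fin 4 → Fin 4)) (n : ℕ) : ℕ :=
  Nat.card {π : Equiv.Perm (Fin n) // ∀ σ ∈ T, ¬ ContainsPattern π σ}

/-- The generating function `F_T(x) = ∑_n |S_n(T)| xⁿ` over `ℚ`. -/
noncomputable def avoiderGF (T : Set (Fin 4 → Fin 4)) : PowerSeries ℚ :=
  PowerSeries.mk fun n => (avoiderCount T n : ℚ)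

/-- The generating function of the Catalan numbers over `ℚ`. -/
noncomputable def catalanGF : PowerSeries ℚ :=
  PowerSeries.mk fun n => (catalan n : ℚ)

/-!
Cut an avoider of length `n + 1` at its maximum as `L n R`. Unless `L` is empty, avoiding 2341 and
3241 with `n` in the role of `4` forces every value of `L` except its largest, `m`, to be smaller
than every value of `R`, and avoiding 2431 with `m` in the role of `2` forces the values of `R`
smaller than `m` to precede the greater ones. These conditions leave three independent avoiders, on
the values of `L` and on the values of `R` below and above `m`, so that
`F - 1 = x (F + (F - 1) F²)`. Hence `G = F - 1` satisfies `G = x φ(G)` with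
`φ = (1 + X)(1 + X (1 + X))`, and Lagrange inversion yields the coefficients.
-/

/-! ### Lagrange inversion -/

section LagrangeInversion

variable {R : Type*} [CommRing R] {φ G : R⟦X⟧}

theorem constantCoeff_eq_zero_of_eq_X_mul {H : R⟦X⟧} (hG : G = X * H) :
    constantCoeff G = 0 := by
  rw [hG, map_mul, constantCoeff_X, zero_mul]

theorem constantCoeff_subst_of_constantCoeff_eq_zero (hG : constantCoeff G = 0) (H : R⟦X⟧) :
    constantCoeff (H.subst G) = constantCoeff H := by
  have hC : (C (constantCoeff H)).subst G = C (constantCoeff H) := subst_C _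
  have hsub : constantCoeff ((H - C (constantCoeff H)).subst G) = 0 :=
    constantCoeff_subst_eq_zero hG _ (by simp)
  rwa [subst_sub (.of_constantCoeff_zero' hG), hC, map_sub, constantCoeff_C, sub_eq_zero] at hsub

theorem coeff_succ_subst_of_eq_X_mul_subst (hG : G = X * φ.subst G) (c : R) (K : R⟦X⟧) (n : ℕ) :
    coeff (n + 1) ((X * K + C c).subst G) = coeff n ((φ * K).subst G) := by
  have hsubst : HasSubst G := .of_constantCoeff_zero' (constantCoeff_eq_zero_of_eq_X_mul hG)
  have hC : (C c).subst G = C c := subst_C c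
  rw [subst_add hsubst, subst_mul hsubst, subst_X hsubst, hC, map_add, coeff_C,
    if_neg n.succ_ne_zero, add_zero, subst_mul hsubst]
  nth_rw 1 [hG]
  rw [mul_assoc, coeff_succ_X_mul]

theorem smul_coeff_derivative_mul_pow (φ K : R⟦X⟧) (n : ℕ) :
    (n + 2) • coeff n (d⁄dX R (φ * K) * φ ^ (n + 1)) =
      (n + 1) • coeff (n + 1) (d⁄dX R (X * K) * φ ^ (n + 2)) := by
  have product_rule : (n + 2) • (d⁄dX R (φ * K) * φ ^ (n + 1)) =
      (n + 1) • (d⁄dX R K * φ ^ (n + 2)) + d⁄dX R (K * φ ^ (n + 2)) := by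
    simp only [Derivation.leibniz, Derivation.leibniz_pow, smul_eq_mul, nsmul_eq_mul,
      show n + 2 - 1 = n + 1 from rfl]
    push_cast
    ring
  have hX : d⁄dX R (X * K) * φ ^ (n + 2) = X * (d⁄dX R K * φ ^ (n + 2)) + K * φ ^ (n + 2) := by
    simp only [Derivation.leibniz, derivative_X, smul_eq_mul]
    ring
  rw [← map_nsmul, product_rule, hX, map_add, map_add, coeff_succ_X_mul, map_nsmul,
    coeff_derivative, nsmul_add]
  simp [mul_comm]

theorem lagrange_inversion [IsAddTorsionFree R] (hG : G = X * φ.subst G) (H : R⟦X⟧) (n : ℕ) :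
    (n + 1) • coeff (n + 1) (H.subst G) = coeff n (d⁄dX R H * φ ^ (n + 1)) := by
  induction n generalizing H with
  | zero =>
    have hG₀ := constantCoeff_eq_zero_of_eq_X_mul hG
    rw [H.eq_X_mul_shift_add_const, coeff_succ_subst_of_eq_X_mul_subst hG]
    simp [constantCoeff_subst_of_constantCoeff_eq_zero hG₀, mul_comm]
  | succ n ih =>
    set K : R⟦X⟧ := mk fun k => coeff (k + 1) H
    have hH : H = X * K + C (constantCoeff H) := H.eq_X_mul_shift_add_const
    apply nsmul_right_injective n.succ_ne_zero
    calc (n + 1) • (n + 2) • coeff (n + 2) (H.subst G)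
        = (n + 2) • (n + 1) • coeff (n + 1) ((φ * K).subst G) := by
          rw [hH, coeff_succ_subst_of_eq_X_mul_subst hG, smul_comm]
      _ = (n + 2) • coeff n (d⁄dX R (φ * K) * φ ^ (n + 1)) := by rw [ih]
      _ = (n + 1) • coeff (n + 1) (d⁄dX R H * φ ^ (n + 2)) := by
          rw [smul_coeff_derivative_mul_pow, hH]
          simp only [map_add, derivative_C, add_zero]

end LagrangeInversion

/-! ### Coefficients of the solution of the functional equation -/

theorem coeff_one_add_X_pow (R : Type*) [CommSemiring R] (m i : ℕ) :
    coeff i ((1 + X : R⟦X⟧) ^ m) = m.choose i := by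
  rw [← Polynomial.coeff_one_add_X_pow, ← Polynomial.coeff_coe]
  simp

theorem coeff_one_add_X_mul_pow (R : Type*) [CommSemiring R] (m n : ℕ) :
    coeff n (((1 + X) * (1 + X * (1 + X)) : R⟦X⟧) ^ m) =
      ∑ j ∈ Finset.range (n + 1), (m.choose j * (m + j).choose (n - j) : R) := by
  have expand : ((1 + X) * (1 + X * (1 + X)) : R⟦X⟧) ^ m =
      ∑ j ∈ Finset.range (m + 1), m.choose j • (X ^ j * (1 + X) ^ (m + j)) := by
    rw [mul_pow, add_comm 1 (X * (1 + X)), add_pow (X * (1 + X)), Finset.mul_sum]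
    refine Finset.sum_congr rfl fun j _ => ?_
    rw [one_pow, mul_pow, nsmul_eq_mul]
    ring
  have coeff_term (j : ℕ) : coeff n (m.choose j • (X ^ j * (1 + X : R⟦X⟧) ^ (m + j))) =
      if j ≤ n then (m.choose j * (m + j).choose (n - j) : R) else 0 := by
    rw [map_nsmul, coeff_X_pow_mul', coeff_one_add_X_pow, nsmul_eq_mul, mul_ite, mul_zero]
  rw [expand, map_sum, Finset.sum_congr rfl fun j _ => coeff_term j, ← Finset.sum_filter]
  refine Finset.sum_subset (fun j hj => ?_) fun j hj hj' => ?_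
  · rw [Finset.mem_filter] at hj
    exact Finset.mem_range_succ_iff.2 hj.2
  · have hmj : m < j := by
      simp only [Finset.mem_filter, Finset.mem_range] at hj hj'
      omega
    rw [Nat.choose_eq_zero_of_lt hmj, Nat.cast_zero, zero_mul]

theorem sum_range_choose_mul_choose_eq_sum_Icc (n : ℕ) :
    ∑ j ∈ Finset.range (n + 1), ((n + 1).choose j * (n + 1 + j).choose (n - j)) =
      ∑ i ∈ Finset.Icc 1 (n + 1), (n + 1).choose i * (2 * (n + 1) - i).choose (i - 1) := by
  refine Finset.sum_nbij' (n + 1 - ·) (n + 1 - ·) ?_ ?_ ?_ ?_ fun j hj => ?_ <;>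
    simp only [Finset.mem_range, Finset.mem_Icc] at *
  iterate 4 omega
  rw [Nat.choose_symm (by omega)]
  congr 2 <;> omega

theorem sub_one_eq_X_mul_subst {R : Type*} [CommRing R] {F : R⟦X⟧}
    (hF : (1 - X * F ^ 2) * (F - 1) = X * F) :
    F - 1 = X * ((1 + X) * (1 + X * (1 + X)) : R⟦X⟧).subst (F - 1) := by
  have hG : F - 1 = X * (F + F ^ 2 * (F - 1)) := by linear_combination hF
  have hsubst : HasSubst (F - 1) :=
    .of_constantCoeff_zero' (constantCoeff_eq_zero_of_eq_X_mul hG)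
  have hone : (1 : R⟦X⟧).subst (F - 1) = (1 : R⟦X⟧) := by
    rw [← coe_substAlgHom hsubst, map_one]
  simp only [subst_mul hsubst, subst_add hsubst, subst_X hsubst, hone]
  linear_combination hF

theorem coeff_eq_sum_of_functional_equation {K : Type*} [Field K] [CharZero K] {F : K⟦X⟧}
    (hF : (1 - X * F ^ 2) * (F - 1) = X * F) {n : ℕ} (hn : 1 ≤ n) :
    coeff n F = ∑ i ∈ Finset.Icc 1 n,
      (1 / (i : K)) * (n - 1).choose (i - 1) * (2 * n - i).choose (i - 1) := by
  obtain ⟨n, rfl⟩ := Nat.exists_eq_add_of_le' hn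
  have hG := sub_one_eq_X_mul_subst hF
  have hsubst : HasSubst (F - 1) :=
    .of_constantCoeff_zero' (constantCoeff_eq_zero_of_eq_X_mul hG)
  have lagrange : ((n + 1 : ℕ) : K) * coeff (n + 1) F = ∑ i ∈ Finset.Icc 1 (n + 1),
      ((n + 1).choose i : K) * (2 * (n + 1) - i).choose (i - 1) := by
    have h := lagrange_inversion hG X n
    rw [subst_X hsubst, derivative_X, one_mul, coeff_one_add_X_mul_pow, map_sub, coeff_one,
      if_neg n.succ_ne_zero, sub_zero, nsmul_eq_mul] at h
    rw [h]
    exact_mod_cast sum_range_choose_mul_choose_eq_sum_Icc n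
  apply mul_left_cancel₀ (show ((n + 1 : ℕ) : K) ≠ 0 from Nat.cast_ne_zero.2 n.succ_ne_zero)
  rw [lagrange, Finset.mul_sum]
  refine Finset.sum_congr rfl fun i hi => ?_
  obtain ⟨i, rfl⟩ := Nat.exists_eq_add_of_le' (Finset.mem_Icc.1 hi).1
  have absorption : ((n + 1 : ℕ) : K) * n.choose i = (n + 1).choose (i + 1) * (i + 1 : ℕ) :=
    mod_cast Nat.add_one_mul_choose_eq n i
  simp only [Nat.add_sub_cancel]
  field_simp
  linear_combination (-((2 * (n + 1) - (i + 1)).choose i : K)) * absorption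

/-! ### Sublists -/

section Sublists

open List

variable {α : Type*}

theorem ofFn_sublist_ofFn_iff {k n : ℕ} {g : Fin k → α} {h : Fin n → α} :
    ofFn g <+ ofFn h ↔ ∃ f : Fin k ↪o Fin n, h ∘ f = g := by
  rw [sublist_iff_exists_fin_orderEmbedding_get_eq]
  let castk := Fin.castOrderIso (length_ofFn (f := g))
  let castn := Fin.castOrderIso (length_ofFn (f := h))
  constructor
  · rintro ⟨f, hf⟩
    refine ⟨(castk.symm.toOrderEmbedding.trans f).trans castn.toOrderEmbedding, funext fun i => ?_⟩
    exact (get_ofFn h _).symm.trans ((hf (castk.symm i)).symm.trans (get_ofFn g _))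
  · rintro ⟨f, rfl⟩
    refine ⟨(castk.toOrderEmbedding.trans f).trans castn.symm.toOrderEmbedding, fun i => ?_⟩
    simp only [get_ofFn]
    rfl

theorem quadruple_sublist_append_cases {a b c d : α} {L R : List α}
    (h : [a, b, c, d] <+ L ++ R) :
    [a, b, c, d] <+ L ∨ ([a, b] <+ L ∧ d ∈ R) ∨ (a ∈ L ∧ [b, c, d] <+ R) ∨
      [a, b, c, d] <+ R := by
  obtain ⟨l₁, l₂, he, h₁, h₂⟩ := sublist_append_iff.1 h
  match l₁ with
  | [] => exact .inr (.inr (.inr (he ▸ h₂)))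
  | [_] =>
    obtain ⟨rfl, rfl⟩ := cons.inj he
    exact .inr (.inr (.inl ⟨singleton_sublist.1 h₁, h₂⟩))
  | x :: y :: l =>
    simp only [cons_append, cons.injEq] at he
    obtain ⟨rfl, rfl, he⟩ := he
    rcases l₂.eq_nil_or_concat with rfl | ⟨l₂, e, rfl⟩
    · rw [append_nil] at he
      exact .inl (he ▸ h₁)
    · obtain rfl : d = e := by simpa using congrArg getLast? he
      have hab : [a, b] <+ a :: b :: l := ((nil_sublist l).cons_cons b).cons_cons a
      exact .inr (.inl ⟨hab.trans h₁, h₂.subset (by simp)⟩)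

theorem filter_append_filter_not_of_pairwise (q : α → Bool) {l : List α}
    (h : l.Pairwise fun x y => q y → q x) : l.filter q ++ l.filter (!q ·) = l := by
  induction h with
  | nil => rfl
  | @cons x l hx _ ih =>
    cases hqx : q x with
    | true => simp [hqx, ih]
    | false =>
      have hnil : l.filter q = [] := filter_eq_nil_iff.2 fun y hy hqy => by
        simpa [hqx] using hx y hy hqy
      rw [hnil, nil_append] at ih
      simp [hqx, hnil, ih]

end Sublists

/-! ### Avoiding words -/

/-- Avoidance of 2341, 2431 and 3241 by a word without repeated letters: a subword `abcd` of such a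
word is an occurrence of one of these patterns exactly when `d < a`, `d < b` and `a < c`. -/
def AvoidsPatterns {α : Type*} [LinearOrder α] (l : List α) : Prop :=
  ∀ a b c d, List.Sublist [a, b, c, d] l → d < a → d < b → c ≤ a

section AvoidsPatterns

variable {α β : Type*} [LinearOrder α] [LinearOrder β]

open List

theorem AvoidsPatterns.sublist {l l' : List α} (h : AvoidsPatterns l) (hl : l' <+ l) :
    AvoidsPatterns l' :=
  fun a b c d hs => h a b c d (hs.trans hl)

theorem avoidsPatterns_map_iff (f : α ↪o β) {l : List α} :
    AvoidsPatterns (l.map f) ↔ AvoidsPatterns l := by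
  constructor
  · intro h a b c d hs hda hdb
    simpa using h (f a) (f b) (f c) (f d) (hs.map f) (by simpa) (by simpa)
  · intro h a b c d hs hda hdb
    obtain ⟨l', hl', he⟩ := sublist_map_iff.1 hs
    obtain ⟨a, b, c, d, rfl⟩ := length_eq_four.1 (by simpa using congrArg length he.symm)
    simp only [map_cons, map_nil, cons.injEq, and_true] at he
    obtain ⟨rfl, rfl, rfl, rfl⟩ := he
    simpa using h a b c d hl' (by simpa using hda) (by simpa using hdb)

theorem AvoidsPatterns.append {L R : List α} (hL : AvoidsPatterns L) (hR : AvoidsPatterns R)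
    (hLR : ∀ x ∈ L, ∀ y ∈ R, x < y) : AvoidsPatterns (L ++ R) := by
  intro a b c d hs hda hdb
  rcases quadruple_sublist_append_cases hs with h | ⟨h, hd⟩ | ⟨ha, h⟩ | h
  · exact hL a b c d h hda hdb
  · exact absurd hda (hLR a (h.subset (by simp)) d hd).asymm
  · exact absurd hda (hLR a ha d (h.subset (by simp))).asymm
  · exact hR a b c d h hda hdb

theorem avoidsPatterns_append_cons_iff {M : α} {L R : List α} (hL : ∀ x ∈ L, x < M)
    (hR : ∀ x ∈ R, x < M) :
    AvoidsPatterns (L ++ M :: R) ↔ AvoidsPatterns L ∧ AvoidsPatterns R ∧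
      L.Pairwise (fun a b => ∀ d ∈ R, a ≤ d ∨ b ≤ d) ∧
      ∀ a ∈ L, R.Pairwise fun c d => d < a → c ≤ a := by
  constructor
  · intro h
    refine ⟨h.sublist (sublist_append_left ..),
      h.sublist ((sublist_cons_self M R).trans (sublist_append_right ..)),
      pairwise_iff_forall_sublist.2 fun {a b} hab d hd => ?_, fun a ha =>
      pairwise_iff_forall_sublist.2 fun {c d} hcd hda => ?_⟩
    · by_contra! hlt
      have hocc : [a, b] ++ [M, d] <+ L ++ M :: R :=
        hab.append ((singleton_sublist.2 hd).cons_cons M)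
      exact (h a b M d hocc hlt.1 hlt.2).not_gt (hL a (hab.subset (by simp)))
    · have hocc : [a] ++ [M, c, d] <+ L ++ M :: R :=
        (singleton_sublist.2 ha).append (hcd.cons_cons M)
      exact h a M c d hocc hda (hR d (hcd.subset (by simp)))
  · rintro ⟨avoidsL, avoidsR, pairL, pairR⟩ a b c d hs hda hdb
    rcases quadruple_sublist_append_cases hs with h | ⟨h, hd⟩ | ⟨ha, h⟩ | h
    · exact avoidsL a b c d h hda hdb
    · have hdM : d ≠ M := (hda.trans (hL a (h.subset (by simp)))).ne
      have hdR : d ∈ R := mem_of_ne_of_mem hdM hd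
      rcases pairwise_iff_forall_sublist.1 pairL h d hdR with hle | hle
      · exact absurd hda hle.not_gt
      · exact absurd hdb hle.not_gt
    · exact pairwise_iff_forall_sublist.1 (pairR a ha) h.tail hda
    · rcases cons_sublist_cons'.1 h with h | ⟨rfl, htail⟩
      · exact avoidsR a b c d h hda hdb
      · exact (hR c (htail.subset (by simp))).le

open Classical in
/-- The pattern-avoiding arrangements of a finite set, that is, the words containing each element of
`s` exactly once and avoiding 2341, 2431 and 3241. -/
noncomputable def avoiders (s : Finset α) : Finset (List α) :=
  {l ∈ s.toList.permutations.toFinset | AvoidsPatterns l}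

theorem mem_avoiders {s : Finset α} {l : List α} :
    l ∈ avoiders s ↔ l.Nodup ∧ (∀ x, x ∈ l ↔ x ∈ s) ∧ AvoidsPatterns l := by
  classical
  rw [avoiders, Finset.mem_filter, mem_toFinset, mem_permutations, ← and_assoc]
  refine and_congr_left fun _ => ⟨fun h => ⟨h.nodup_iff.2 s.nodup_toList, fun x => ?_⟩, fun h => ?_⟩
  · rw [h.mem_iff, Finset.mem_toList]
  · rw [perm_ext_iff_of_nodup h.1 s.nodup_toList]
    simpa only [Finset.mem_toList] using h.2

theorem avoiders_map (f : α ↪o β) (s : Finset α) :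
    avoiders (s.map f.toEmbedding) =
      (avoiders s).map ⟨List.map f, map_injective_iff.2 f.injective⟩ := by
  ext l
  simp only [Finset.mem_map, Function.Embedding.coeFn_mk, mem_avoiders]
  constructor
  · rintro ⟨hnodup, hmem, havoids⟩
    obtain ⟨l, rfl⟩ : l ∈ Set.range (List.map f) := by
      rw [Set.range_list_map]
      intro x hx
      obtain ⟨y, -, rfl⟩ := (hmem x).1 hx
      exact ⟨y, rfl⟩
    refine ⟨l, ⟨hnodup.of_map, fun x => ?_, (avoidsPatterns_map_iff f).1 havoids⟩, rfl⟩
    simpa using hmem (f x)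
  · rintro ⟨l, ⟨hnodup, hmem, havoids⟩, rfl⟩
    exact ⟨hnodup.map f.injective, fun x => by simp [hmem], (avoidsPatterns_map_iff f).2 havoids⟩

end AvoidsPatterns

/-! ### Permutations as words -/

/-- The patterns 2341, 2431 and 3241, written with values starting at `0`. -/
abbrev patternSet : Set (Fin 4 → Fin 4) :=
  {![1, 2, 3, 0], ![1, 3, 2, 0], ![2, 1, 3, 0]}

theorem exists_mem_patternSet_lt_iff_lt_iff {α : Type*} [LinearOrder α] {τ : Fin 4 → α}
    (hτ : τ.Injective) :
    (∃ σ ∈ patternSet, ∀ a b, σ a < σ b ↔ τ a < τ b) ↔ τ 3 < τ 0 ∧ τ 3 < τ 1 ∧ τ 0 < τ 2 := by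
  constructor
  · rintro ⟨σ, rfl | rfl | rfl, h⟩ <;>
      exact ⟨(h 3 0).1 (by decide), (h 3 1).1 (by decide), (h 0 2).1 (by decide)⟩
  · rintro ⟨h30, h31, h02⟩
    have of_comp_eq (σ : Fin 4 → Fin 4) (g : Fin 4 → α) (hg : ∀ i : Fin 3, g i.castSucc < g i.succ)
        (hgσ : ∀ a, g (σ a) = τ a) (a b : Fin 4) : σ a < σ b ↔ τ a < τ b := by
      rw [← hgσ, ← hgσ, (Fin.strictMono_iff_lt_succ.2 hg).lt_iff_lt]
    rcases (hτ.ne (show 0 ≠ 1 by decide)).lt_or_gt with h01 | h10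
    · rcases (hτ.ne (show 1 ≠ 2 by decide)).lt_or_gt with h12 | h21
      · exact ⟨_, by simp, of_comp_eq ![1, 2, 3, 0] ![τ 3, τ 0, τ 1, τ 2]
          (by simp [Fin.forall_fin_succ, *]) (by simp [Fin.forall_fin_succ])⟩
      · exact ⟨_, by simp, of_comp_eq ![1, 3, 2, 0] ![τ 3, τ 0, τ 2, τ 1]
          (by simp [Fin.forall_fin_succ, *]) (by simp [Fin.forall_fin_succ])⟩
    · exact ⟨_, by simp, of_comp_eq ![2, 1, 3, 0] ![τ 3, τ 1, τ 0, τ 2]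
        (by simp [Fin.forall_fin_succ, *]) (by simp [Fin.forall_fin_succ])⟩

theorem avoidsPatterns_ofFn_iff {α : Type*} [LinearOrder α] {n : ℕ} {h : Fin n → α} :
    AvoidsPatterns (List.ofFn h) ↔
      ∀ f : Fin 4 ↪o Fin n, h (f 3) < h (f 0) → h (f 3) < h (f 1) → h (f 2) ≤ h (f 0) := by
  constructor
  · exact fun havoids f =>
      havoids _ _ _ _ (ofFn_sublist_ofFn_iff (g := fun i => h (f i)).2 ⟨f, rfl⟩)
  · intro h_le a b c d hs
    obtain ⟨f, hf⟩ := ofFn_sublist_ofFn_iff (g := ![a, b, c, d]).1 hs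
    have hf' (i : Fin 4) : h (f i) = ![a, b, c, d] i := congrFun hf i
    simpa [hf'] using h_le f

theorem forall_not_containsPattern_iff_avoidsPatterns {n : ℕ} (π : Equiv.Perm (Fin n)) :
    (∀ σ ∈ patternSet, ¬ ContainsPattern π σ) ↔ AvoidsPatterns (List.ofFn π) := by
  have contains_iff : (∃ σ ∈ patternSet, ContainsPattern π σ) ↔
      ∃ f : Fin 4 ↪o Fin n, π (f 3) < π (f 0) ∧ π (f 3) < π (f 1) ∧ π (f 0) < π (f 2) := by
    simp only [ContainsPattern, ← exists_and_left]
    rw [exists_comm]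
    exact exists_congr fun f =>
      exists_mem_patternSet_lt_iff_lt_iff (τ := π ∘ f) (π.injective.comp f.injective)
  rw [avoidsPatterns_ofFn_iff]
  simpa using contains_iff.not

theorem card_avoiders_univ (n : ℕ) :
    (avoiders (Finset.univ : Finset (Fin n))).card = avoiderCount patternSet n := by
  let word (π : {π : Equiv.Perm (Fin n) // ∀ σ ∈ patternSet, ¬ ContainsPattern π σ}) :
      avoiders (Finset.univ : Finset (Fin n)) :=
    ⟨List.ofFn π.1, mem_avoiders.2 ⟨List.nodup_ofFn.2 π.1.injective,
      by simpa using fun x => π.1.surjective x,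
      (forall_not_containsPattern_iff_avoidsPatterns π.1).1 π.2⟩⟩
  have word_injective : word.Injective := fun π π' h =>
    Subtype.ext (DFunLike.coe_injective (List.ofFn_injective (congrArg Subtype.val h)))
  have word_surjective : word.Surjective := by
    rintro ⟨l, hl⟩
    obtain ⟨hnodup, hmem, havoids⟩ := mem_avoiders.1 hl
    let e := hnodup.getEquivOfForallMemList l fun x => (hmem x).2 (Finset.mem_univ x)
    have hlen : n = l.length := by simpa using (Fintype.card_congr e).symm
    have hofFn : List.ofFn ((finCongr hlen).trans e) = l :=
      List.ext_get (by simp [← hlen]) (by simp [e])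
    rw [← hofFn, ← forall_not_containsPattern_iff_avoidsPatterns] at havoids
    exact ⟨⟨_, havoids⟩, Subtype.ext hofFn⟩
  rw [avoiderCount, Nat.card_congr (.ofBijective word ⟨word_injective, word_surjective⟩),
    Nat.card_eq_fintype_card, Fintype.card_coe]

theorem card_avoiders {α : Type*} [LinearOrder α] (s : Finset α) :
    (avoiders s).card = avoiderCount patternSet s.card := by
  conv_lhs => rw [← s.map_orderEmbOfFin_univ rfl, avoiders_map, Finset.card_map]
  exact card_avoiders_univ _

/-! ### Decomposition at the maximum -/

section Decomposition

open List
open Finset.HasAntidiagonal (antidiagonal)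

/-- The nonempty sets of values that may stand to the left of the maximum of an avoider: an initial
segment `{0, …, p - 1}` and one further value `p + s`, where `s` counts the skipped values. -/
def lowerBlock (p s : ℕ) : Finset ℕ :=
  insert (p + s) (Finset.range p)

theorem mem_lowerBlock {p s x : ℕ} : x ∈ lowerBlock p s ↔ x = p + s ∨ x < p := by
  simp [lowerBlock]

theorem card_lowerBlock (p s : ℕ) : (lowerBlock p s).card = p + 1 := by
  simp [lowerBlock]

theorem lowerBlock_inj {p s p' s' : ℕ} :
    lowerBlock p s = lowerBlock p' s' ↔ p = p' ∧ s = s' := by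
  refine ⟨fun h => ?_, fun ⟨hp, hs⟩ => by rw [hp, hs]⟩
  obtain rfl : p = p' := by simpa [card_lowerBlock] using congrArg Finset.card h
  have hmem : p + s ∈ lowerBlock p s' := h ▸ mem_lowerBlock.2 (.inl rfl)
  rw [mem_lowerBlock] at hmem
  omega

theorem append_cons_append_mem_avoiders_range_succ {p s n : ℕ} (hn : p + s < n) {L S G : List ℕ}
    (hL : L ∈ avoiders (lowerBlock p s)) (hS : S ∈ avoiders (Finset.Ico p (p + s)))
    (hG : G ∈ avoiders (Finset.Ico (p + s + 1) n)) :
    L ++ n :: (S ++ G) ∈ avoiders (Finset.range (n + 1)) := by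
  simp only [mem_avoiders, mem_lowerBlock, Finset.mem_Ico] at hL hS hG
  obtain ⟨nodupL, memL, avoidsL⟩ := hL
  obtain ⟨nodupS, memS, avoidsS⟩ := hS
  obtain ⟨nodupG, memG, avoidsG⟩ := hG
  refine mem_avoiders.2 ⟨?_, fun x => ?_, ?_⟩
  · simp only [nodup_append, nodup_cons, mem_append, mem_cons, memL, memS, memG]
    grind
  · simp only [mem_append, mem_cons, memL, memS, memG, Finset.mem_range]
    omega
  refine (avoidsPatterns_append_cons_iff ?_ ?_).2 ⟨avoidsL, avoidsS.append avoidsG ?_,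
    nodupL.pairwise_of_forall_ne ?_, fun a ha => pairwise_append.2
      ⟨pairwise_of_forall_mem_list ?_, pairwise_of_forall_mem_list ?_, ?_⟩⟩ <;>
    simp only [mem_append, memL, memS, memG] at * <;> omega

theorem exists_lowerBlock_of_pairwise {n : ℕ} {L R : List ℕ} (hL : L ≠ [])
    (hLR : ∀ x, x ∈ L ∨ x ∈ R ↔ x < n) (disj : L.Disjoint R)
    (pairL : L.Pairwise fun a b => ∀ d ∈ R, a ≤ d ∨ b ≤ d) :
    ∃ p s, p + s < n ∧ ∀ x, x ∈ L ↔ x ∈ lowerBlock p s := by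
  obtain ⟨m, hm, hmax⟩ := L.toFinset.exists_max_image id (by simpa using hL)
  simp only [mem_toFinset, id] at hm hmax
  have below_R {a : ℕ} (ha : a ∈ L) (ham : a ≠ m) {d : ℕ} (hd : d ∈ R) : a ≤ d := by
    have : Std.Symm fun a b => ∀ d ∈ R, a ≤ d ∨ b ≤ d := ⟨fun _ _ h d hd => (h d hd).symm⟩
    exact (pairL.forall ha hm ham d hd).elim id (hmax a ha).trans
  have isLowerSet : IsLowerSet {x | x ∈ L ∧ x ≠ m} := by
    rintro x y hyx ⟨hx, hxm⟩
    have hxn : x < n := (hLR x).1 (.inl hx)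
    have hy : y ∈ L := ((hLR y).2 (hyx.trans_lt hxn)).resolve_right fun hyR =>
      disj hx (le_antisymm hyx (below_R hx hxm hyR) ▸ hyR)
    exact ⟨hy, (hyx.trans_lt ((hmax x hx).lt_of_ne hxm)).ne⟩
  obtain ⟨p, hp⟩ := isLowerSet.eq_univ_or_Iio.resolve_left fun h => (h ▸ Set.mem_univ m).2 rfl
  have lower_iff (x : ℕ) : x ∈ L ∧ x ≠ m ↔ x < p := Set.ext_iff.1 hp x
  obtain ⟨s, rfl⟩ : ∃ s, m = p + s :=
    Nat.exists_eq_add_of_le (not_lt.1 fun h => ((lower_iff m).2 h).2 rfl)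
  refine ⟨p, s, (hLR _).1 (.inl hm), fun x => ?_⟩
  rw [mem_lowerBlock, ← lower_iff]
  by_cases hx : x = p + s <;> simp [hx, hm]

theorem exists_eq_append_of_pairwise {p s n : ℕ} (hn : p + s < n) {R : List ℕ}
    (hR : R ∈ avoiders (Finset.range n \ lowerBlock p s))
    (pairR : R.Pairwise fun c d => d < p + s → c ≤ p + s) :
    ∃ S ∈ avoiders (Finset.Ico p (p + s)), ∃ G ∈ avoiders (Finset.Ico (p + s + 1) n),
      R = S ++ G := by
  obtain ⟨nodup, mem, avoids⟩ := mem_avoiders.1 hR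
  simp only [Finset.mem_sdiff, Finset.mem_range, mem_lowerBlock] at mem
  have split : R.filter (· < p + s) ++ R.filter (fun x => !decide (x < p + s)) = R := by
    refine filter_append_filter_not_of_pairwise _ (pairR.imp_of_mem fun {c d} hc _ hcd hd => ?_)
    have := (mem c).1 hc
    have := hcd (by simpa using hd)
    simp only [decide_eq_true_eq]
    omega
  refine ⟨_, mem_avoiders.2 ⟨nodup.filter _, fun x => ?_, avoids.sublist filter_sublist⟩,
    _, mem_avoiders.2 ⟨nodup.filter _, fun x => ?_, avoids.sublist filter_sublist⟩,
    split.symm⟩ <;>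
  · simp only [mem_filter, mem, Finset.mem_Ico, decide_eq_true_eq, Bool.not_eq_true',
      decide_eq_false_iff_not]
    omega

theorem eq_cons_or_eq_append_of_mem_avoiders_range_succ {n : ℕ} {l : List ℕ}
    (hl : l ∈ avoiders (Finset.range (n + 1))) :
    (∃ R ∈ avoiders (Finset.range n), n :: R = l) ∨
      ∃ p s, p + s < n ∧ ∃ L ∈ avoiders (lowerBlock p s),
        ∃ S ∈ avoiders (Finset.Ico p (p + s)), ∃ G ∈ avoiders (Finset.Ico (p + s + 1) n),
          l = L ++ n :: (S ++ G) := by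
  obtain ⟨nodup, mem, avoids⟩ := mem_avoiders.1 hl
  obtain ⟨L, R, rfl⟩ := append_of_mem ((mem n).2 (Finset.self_mem_range_succ n))
  obtain ⟨⟨nodupR, nodupL, disjLR⟩, hnL, hnR⟩ :
      (R.Nodup ∧ L.Nodup ∧ L.Disjoint R) ∧ n ∉ L ∧ n ∉ R := by
    grind [nodup_append, nodup_cons, List.Disjoint]
  have memLR (x : ℕ) : x ∈ L ∨ x ∈ R ↔ x < n := by
    have := mem x
    grind
  obtain ⟨avoidsL, avoidsR, pairL, pairR⟩ := (avoidsPatterns_append_cons_iff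
    (fun x hx => (memLR x).1 (.inl hx)) (fun x hx => (memLR x).1 (.inr hx))).1 avoids
  rcases eq_or_ne L [] with rfl | hL
  · exact .inl ⟨R, mem_avoiders.2 ⟨nodupR, by simpa using memLR, avoidsR⟩, rfl⟩
  obtain ⟨p, s, hps, memL⟩ := exists_lowerBlock_of_pairwise hL memLR disjLR pairL
  have hmL : p + s ∈ L := (memL _).2 (mem_lowerBlock.2 (.inl rfl))
  have memR (x : ℕ) : x ∈ R ↔ x ∈ Finset.range n \ lowerBlock p s := by
    rw [Finset.mem_sdiff, ← memL, Finset.mem_range, ← memLR]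
    exact ⟨fun hx => ⟨.inr hx, fun hxL => disjLR hxL hx⟩, fun hx => hx.1.resolve_left hx.2⟩
  obtain ⟨S, hS, G, hG, rfl⟩ :=
    exists_eq_append_of_pairwise hps (mem_avoiders.2 ⟨nodupR, memR, avoidsR⟩) (pairR _ hmL)
  exact .inr ⟨p, s, hps, L, mem_avoiders.2 ⟨nodupL, memL, avoidsL⟩, S, hS, G, hG, rfl⟩

theorem append_cons_append_inj_of_mem_avoiders {p s p' s' n : ℕ} {L S G L' S' G' : List ℕ}
    (hn : p + s < n) (hL : L ∈ avoiders (lowerBlock p s))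
    (hS : S ∈ avoiders (Finset.Ico p (p + s))) (hG : G ∈ avoiders (Finset.Ico (p + s + 1) n))
    (hL' : L' ∈ avoiders (lowerBlock p' s')) (hS' : S' ∈ avoiders (Finset.Ico p' (p' + s')))
    (h : L ++ n :: (S ++ G) = L' ++ n :: (S' ++ G')) :
    (p = p' ∧ s = s') ∧ L = L' ∧ S = S' ∧ G = G' := by
  have hnL : n ∉ L := by
    rw [(mem_avoiders.1 hL).2.1, mem_lowerBlock]
    omega
  have hnSG : n ∉ S ++ G := by
    rw [mem_append, (mem_avoiders.1 hS).2.1, (mem_avoiders.1 hG).2.1, Finset.mem_Ico,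
      Finset.mem_Ico]
    omega
  obtain ⟨rfl, -, hSG⟩ := (append_cons_inj_of_notMem hnL hnSG).1 h
  have hblock : lowerBlock p s = lowerBlock p' s' := Finset.ext fun x =>
    ((mem_avoiders.1 hL).2.1 x).symm.trans ((mem_avoiders.1 hL').2.1 x)
  obtain ⟨rfl, rfl⟩ := lowerBlock_inj.1 hblock
  have hperm : S ~ S' := (perm_ext_iff_of_nodup (mem_avoiders.1 hS).1 (mem_avoiders.1 hS').1).2
    fun x => ((mem_avoiders.1 hS).2.1 x).trans ((mem_avoiders.1 hS').2.1 x).symm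
  exact ⟨⟨rfl, rfl⟩, rfl, append_inj hSG hperm.length_eq⟩

/-- The triples `(L, S, G)` for which `L n S G` is an avoider of length `n + 1` with
`lowerBlock p s` as the set of values to the left of the maximum `n`: the words `S` and `G` consist
of the remaining values smaller, respectively greater, than `p + s`. -/
noncomputable def blockTriples (n p s : ℕ) : Finset (List ℕ × List ℕ × List ℕ) :=
  avoiders (lowerBlock p s) ×ˢ
    avoiders (Finset.Ico p (p + s)) ×ˢ avoiders (Finset.Ico (p + s + 1) n)

theorem card_blockTriples (n p s : ℕ) :
    (blockTriples n p s).card = avoiderCount patternSet (p + 1) * avoiderCount patternSet s *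
      avoiderCount patternSet (n - (p + s + 1)) := by
  simp only [blockTriples, Finset.card_product, card_avoiders, card_lowerBlock, Nat.card_Ico,
    Nat.add_sub_cancel_left, mul_assoc]

/-- The avoiders of length `n + 1` that do not start with their maximum `n`. They are indexed by the
largest value `m = p + s` to the left of `n`, then by `(p, s)`, then by a triple of words. -/
noncomputable def splitAvoiders (n : ℕ) : Finset (List ℕ) :=
  (((Finset.range n).sigma antidiagonal).sigma fun x =>
    blockTriples n x.2.1 x.2.2).image fun z => z.2.1 ++ n :: (z.2.2.1 ++ z.2.2.2)

theorem mem_splitAvoiders {n : ℕ} {l : List ℕ} :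
    l ∈ splitAvoiders n ↔ ∃ p s, p + s < n ∧ ∃ L ∈ avoiders (lowerBlock p s),
      ∃ S ∈ avoiders (Finset.Ico p (p + s)), ∃ G ∈ avoiders (Finset.Ico (p + s + 1) n),
        l = L ++ n :: (S ++ G) := by
  simp only [splitAvoiders, blockTriples, Finset.mem_image, Finset.mem_sigma, Finset.mem_range,
    Finset.HasAntidiagonal.mem_antidiagonal, Finset.mem_product]
  constructor
  · rintro ⟨⟨⟨m, p, s⟩, L, S, G⟩, ⟨⟨hm, hps⟩, hL, hS, hG⟩, rfl⟩
    exact ⟨p, s, hps.trans_lt hm, L, hL, S, hS, G, hG, rfl⟩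
  · rintro ⟨p, s, hn, L, hL, S, hS, G, hG, rfl⟩
    exact ⟨⟨⟨p + s, p, s⟩, L, S, G⟩, ⟨⟨hn, rfl⟩, hL, hS, hG⟩, rfl⟩

theorem cons_mem_avoiders_range_succ {n : ℕ} {R : List ℕ} (hR : R ∈ avoiders (Finset.range n)) :
    n :: R ∈ avoiders (Finset.range (n + 1)) := by
  obtain ⟨nodup, mem, avoids⟩ := mem_avoiders.1 hR
  simp only [Finset.mem_range] at mem
  have avoids_cons : AvoidsPatterns ([] ++ n :: R) :=
    (avoidsPatterns_append_cons_iff (by simp) fun x hx => (mem x).1 hx).2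
      ⟨avoids.sublist (nil_sublist R), avoids, .nil, by simp⟩
  refine mem_avoiders.2 ⟨nodup_cons.2 ⟨by simp [mem], nodup⟩, fun x => ?_, avoids_cons⟩
  rw [mem_cons, mem, Finset.mem_range]
  omega

theorem avoiders_range_succ (n : ℕ) :
    avoiders (Finset.range (n + 1)) =
      (avoiders (Finset.range n)).image (n :: ·) ∪ splitAvoiders n := by
  ext l
  simp only [Finset.mem_union, Finset.mem_image, mem_splitAvoiders]
  constructor
  · exact eq_cons_or_eq_append_of_mem_avoiders_range_succ
  · rintro (⟨R, hR, rfl⟩ | ⟨p, s, hps, L, hL, S, hS, G, hG, rfl⟩)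
    · exact cons_mem_avoiders_range_succ hR
    · exact append_cons_append_mem_avoiders_range_succ hps hL hS hG

theorem disjoint_image_cons_splitAvoiders (n : ℕ) :
    Disjoint ((avoiders (Finset.range n)).image (n :: ·)) (splitAvoiders n) := by
  refine Finset.disjoint_left.2 fun l hcons hsplit => ?_
  obtain ⟨R, -, rfl⟩ := Finset.mem_image.1 hcons
  obtain ⟨p, s, hn, L, hL, S, -, G, -, h⟩ := mem_splitAvoiders.1 hsplit
  have memL := (mem_avoiders.1 hL).2.1
  have hmL : p + s ∈ L := (memL _).2 (mem_lowerBlock.2 (.inl rfl))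
  obtain ⟨x, L, rfl⟩ := exists_cons_of_ne_nil (ne_nil_of_mem hmL)
  obtain ⟨rfl, -⟩ := cons.inj h
  have hx := mem_lowerBlock.1 ((memL n).1 mem_cons_self)
  omega

theorem card_splitAvoiders (n : ℕ) :
    (splitAvoiders n).card = ∑ m ∈ Finset.range n, ∑ x ∈ antidiagonal m,
      avoiderCount patternSet (x.1 + 1) * avoiderCount patternSet x.2 *
        avoiderCount patternSet (n - (m + 1)) := by
  rw [splitAvoiders, Finset.card_image_of_injOn, Finset.card_sigma, Finset.sum_sigma]
  · refine Finset.sum_congr rfl fun m _ => Finset.sum_congr rfl fun x hx => ?_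
    rw [card_blockTriples, Finset.HasAntidiagonal.mem_antidiagonal.1 hx]
  · rintro ⟨⟨m, p, s⟩, L, S, G⟩ hz ⟨⟨m', p', s'⟩, L', S', G'⟩ hz' h
    simp only [blockTriples, Finset.coe_sigma, Set.mem_sigma_iff, Finset.mem_coe,
      Finset.mem_range, Finset.HasAntidiagonal.mem_antidiagonal, Finset.mem_product] at hz hz'
    obtain ⟨⟨hn, rfl⟩, hL, hS, hG⟩ := hz
    obtain ⟨⟨-, rfl⟩, hL', hS', -⟩ := hz'
    obtain ⟨⟨rfl, rfl⟩, rfl, rfl, rfl⟩ :=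
      append_cons_append_inj_of_mem_avoiders hn hL hS hG hL' hS' h
    rfl

theorem avoiderCount_succ (n : ℕ) :
    avoiderCount patternSet (n + 1) = avoiderCount patternSet n +
      ∑ m ∈ Finset.range n, ∑ x ∈ antidiagonal m,
        avoiderCount patternSet (x.1 + 1) * avoiderCount patternSet x.2 *
          avoiderCount patternSet (n - (m + 1)) := by
  have h := congrArg Finset.card (avoiders_range_succ n)
  rwa [Finset.card_union_of_disjoint (disjoint_image_cons_splitAvoiders n), card_splitAvoiders,
    Finset.card_image_of_injective _ cons_injective, card_avoiders, card_avoiders,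
    Finset.card_range, Finset.card_range] at h

theorem avoiderCount_zero : avoiderCount patternSet 0 = 1 := by
  have avoiders_empty : avoiders (∅ : Finset ℕ) = {[]} := by
    ext l
    rw [mem_avoiders, Finset.mem_singleton]
    constructor
    · rintro ⟨-, hmem, -⟩
      exact subset_nil.1 fun x hx => absurd ((hmem x).1 hx) (Finset.notMem_empty x)
    · rintro rfl
      simp [AvoidsPatterns]
  rw [← Finset.card_empty (α := ℕ), ← card_avoiders, avoiders_empty, Finset.card_singleton]

end Decomposition

theorem avoiderGF_functional_equation :
    (1 - X * avoiderGF patternSet ^ 2) * (avoiderGF patternSet - 1) =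
      X * avoiderGF patternSet := by
  set F := avoiderGF patternSet with hF
  let A : ℚ⟦X⟧ := mk fun n => (avoiderCount patternSet (n + 1) : ℚ)
  have F_eq : F = X * A + 1 := by
    rw [F.eq_X_mul_shift_add_const]
    simp [hF, A, avoiderGF, avoiderCount_zero]
  have A_eq : A = F + X * (A * F * F) := by
    ext n
    cases n with
    | zero => simp [hF, A, avoiderGF, avoiderCount_succ 0]
    | succ k =>
      rw [map_add, coeff_succ_X_mul, coeff_mul,
        Finset.Nat.sum_antidiagonal_eq_sum_range_succ_mk]
      simp only [coeff_mul, A, hF, avoiderGF, coeff_mk, Finset.sum_mul]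
      rw [avoiderCount_succ]
      push_cast
      simp
  linear_combination (1 - X * F ^ 2) * F_eq + X * A_eq

theorem statement_19 :
    (∀ n : ℕ, 1 ≤ n →
      (avoiderCount ({![1,2,3,0], ![1,3,2,0], ![2,1,3,0]} : Set (Fin 4 → Fin 4)) n : ℚ) =
        ∑ i ∈ Finset.Icc 1 n,
          (1 / (i : ℚ)) * (Nat.choose (n - 1) (i - 1)) * (Nat.choose (2 * n - i) (i - 1))) ∧
    (1 - X * (avoiderGF ({![1,2,3,0], ![1,3,2,0], ![2,1,3,0]} : Set (Fin 4 → Fin 4)))^2) *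
        (avoiderGF ({![1,2,3,0], ![1,3,2,0], ![2,1,3,0]} : Set (Fin 4 → Fin 4)) - 1) =
      X * avoiderGF ({![1,2,3,0], ![1,3,2,0], ![2,1,3,0]} : Set (Fin 4 → Fin 4)) := by
  refine ⟨fun n hn => ?_, avoiderGF_functional_equation⟩
  rw [← coeff_eq_sum_of_functional_equation avoiderGF_functional_equation hn, avoiderGF, coeff_mk]
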